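/- arXiv:math/0604376 — 2 statements merged into one kernel-verified Lean document; each statement's English description precedes it below -/
import Mathlib

section
/- 321197185 is a Carmichael number with exactly 6 distinct prime factors, and it is the smallest such: every Carmichael number with exactly 6 distinct prime factors is at least 321197185. -/
/-- A Carmichael number: a composite natural number `N` such that
`b ^ (N - 1) ≡ 1 [MOD N]` for every `b` coprime to `N`. -/
def IsCarmichael (N : ℕ) : Prop :=
  1 < N ∧ ¬ N.Prime ∧ ∀ b : ℕ, Nat.Coprime b N → b ^ (N - 1) ≡ 1 [MOD N]

/-! Korselt's criterion makes a Carmichael number `N` squarefree with `N ≡ 1 [MOD p - 1]` for every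
prime `p ∣ N`. Choose the prime factors in increasing order: if `P` is the product of those already
chosen and `L` is the least common multiple of the numbers `p - 1`, then `P` divides `N` and `L`
divides `N - 1`, so `P` and `L` are coprime. Together with the bound `P * q ^ r ≤ N` on the next
prime `q` when `r` primes are missing, this leaves few branches. The last prime `q` satisfies
`P * q ≡ 1 [MOD L]`, hence `q ≡ 1 [MOD gcd L (P - 1)]`, and `q - 1 ∣ P - 1`, so that few candidates
remain for it, and the whole search tree is small enough for kernel evaluation. -/

open ArithmeticFunction (carmichael)

theorem carmichael_dvd_iff_forall_coprime {N k : ℕ} (hN : N ≠ 0) :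
    carmichael N ∣ k ↔ ∀ b : ℕ, b.Coprime N → b ^ k ≡ 1 [MOD N] := by
  have : NeZero N := ⟨hN⟩
  rw [ArithmeticFunction.carmichael_eq_exponent hN, Monoid.exponent_dvd_iff_forall_pow_eq_one]
  constructor
  · intro h b hb
    simpa [← ZMod.natCast_eq_natCast_iff] using
      congrArg Units.val (h (ZMod.unitOfCoprime b hb))
  · intro h u
    have hu := h (u : ZMod N).val (ZMod.val_coe_unit_coprime u)
    rw [← ZMod.natCast_eq_natCast_iff] at hu
    ext
    simpa using hu

theorem isCarmichael_iff_carmichael_dvd {N : ℕ} :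
    IsCarmichael N ↔ 1 < N ∧ ¬ N.Prime ∧ carmichael N ∣ N - 1 := by
  refine and_congr_right fun hN ↦ and_congr_right fun _ ↦ ?_
  exact (carmichael_dvd_iff_forall_coprime (by lia)).symm

theorem carmichael_prime_pow_of_le_two {p n : ℕ} (hp : p.Prime) (hn : n ≤ 2) :
    carmichael (p ^ n) = (p ^ n).totient := by
  obtain rfl | hp2 := eq_or_ne p 2
  · exact ArithmeticFunction.carmichael_two_pow_of_le_two_eq_totient hn
  · exact ArithmeticFunction.carmichael_pow_of_prime_ne_two n hp hp2

theorem carmichael_prime {p : ℕ} (hp : p.Prime) : carmichael p = p - 1 := by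
  simpa [Nat.totient_prime hp] using carmichael_prime_pow_of_le_two hp one_le_two

theorem dvd_carmichael_prime_sq {p : ℕ} (hp : p.Prime) : p ∣ carmichael (p ^ 2) := by
  rw [carmichael_prime_pow_of_le_two hp le_rfl, Nat.totient_prime_pow_succ hp, pow_one]
  exact dvd_mul_right p (p - 1)

namespace IsCarmichael

variable {N p : ℕ}

theorem modEq_one_of_dvd_carmichael (h : IsCarmichael N) {m : ℕ} (hm : m ∣ carmichael N) :
    N ≡ 1 [MOD m] :=
  have hN := isCarmichael_iff_carmichael_dvd.mp h
  ((Nat.modEq_iff_dvd' hN.1.le).mpr (hm.trans hN.2.2)).symm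

theorem modEq_one_of_prime_dvd (h : IsCarmichael N) (hp : p.Prime) (hpN : p ∣ N) :
    N ≡ 1 [MOD p - 1] :=
  h.modEq_one_of_dvd_carmichael (carmichael_prime hp ▸ ArithmeticFunction.carmichael_dvd hpN)

theorem squarefree (h : IsCarmichael N) : Squarefree N := by
  refine Nat.squarefree_iff_prime_squarefree.mpr fun p hp hpN ↦ hp.not_dvd_one ?_
  have hN : N ≡ 1 [MOD p] := h.modEq_one_of_dvd_carmichael <|
    (dvd_carmichael_prime_sq hp).trans (ArithmeticFunction.carmichael_dvd (sq p ▸ hpN))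
  exact (hN.dvd_iff dvd_rfl).mp (dvd_of_mul_left_dvd hpN)

end IsCarmichael

theorem isCarmichael_prod {S : Finset ℕ} (hS : ∀ p ∈ S, p.Prime) (hcard : 1 < S.card)
    (hpred : ∀ p ∈ S, p - 1 ∣ ∏ q ∈ S, q - 1) : IsCarmichael (∏ p ∈ S, p) := by
  have hfactors : (∏ p ∈ S, p).primeFactors = S := Nat.primeFactors_prod hS
  have hnotprime : ¬ (∏ p ∈ S, p).Prime := fun h ↦ by
    rw [← hfactors, h.primeFactors, Finset.card_singleton] at hcard
    exact hcard.false
  have hcoprime : Set.Pairwise (S : Set ℕ) (Function.onFun Nat.Coprime id) := fun p hp q hq hpq ↦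
    (Nat.coprime_primes (hS p hp) (hS q hq)).mpr hpq
  refine isCarmichael_iff_carmichael_dvd.mpr ⟨?_, hnotprime, ?_⟩
  · rw [← Nat.nonempty_primeFactors, hfactors]
    exact Finset.card_pos.mp (by lia)
  · rw [show ∏ p ∈ S, p = S.prod id from rfl,
      ArithmeticFunction.carmichael_finsetProd hcoprime]
    exact Finset.lcm_dvd fun p hp ↦ (carmichael_prime (hS p hp)).dvd.trans (hpred p hp)

/-- The products `P * q ≤ B` with `q > p` prime and `P * q ≡ 1` modulo both `L` and `q - 1`:
the last step of `carmichaelSearch`. Only `q ≡ 1 [MOD gcd L (P - 1)]` are tried. -/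
def carmichaelCompletions (B p P L : ℕ) : List ℕ :=
  (((List.range (B / P / L.gcd (P - 1) + 1)).map fun k ↦ L.gcd (P - 1) * k + 1).filter fun q ↦
    P * q ≡ 1 [MOD L] ∧ p < q ∧ P ≡ 1 [MOD q - 1] ∧ q.Prime).map fun q ↦ P * q

/-- Candidates for the Carmichael numbers up to `B` that are `P` times `d + 1` distinct primes
greater than `p`, where `P` is the product of the primes chosen so far and `L` is the least common
multiple of their predecessors. -/
def carmichaelSearch (B : ℕ) : ℕ → ℕ → ℕ → ℕ → List ℕ
  | 0, p, P, L => carmichaelCompletions B p P L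
  | d + 1, p, P, L =>
    ((List.range' (p + 1) (Nat.nthRoot (d + 2) (B / P) - p)).filter fun q ↦
      q.Coprime L ∧ P.Coprime (q - 1) ∧ q.Prime).flatMap fun q ↦
        carmichaelSearch B d q (P * q) (L.lcm (q - 1))

theorem mul_mem_carmichaelCompletions {B p P L q : ℕ} (hP : 0 < P) (hB : P * q ≤ B)
    (hq : q.Prime) (hpq : p < q) (hL : P * q ≡ 1 [MOD L]) (hpred : P * q ≡ 1 [MOD q - 1]) :
    P * q ∈ carmichaelCompletions B p P L := by
  have hPg : P ≡ 1 [MOD L.gcd (P - 1)] :=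
    ((Nat.modEq_iff_dvd' hP).mpr (Nat.gcd_dvd_right L (P - 1))).symm
  have hqg : 1 ≡ q [MOD L.gcd (P - 1)] :=
    (hL.of_dvd (Nat.gcd_dvd_left L (P - 1))).symm.trans (by simpa using hPg.mul_right q)
  have hPq : P ≡ 1 [MOD q - 1] :=
    have hq1 : q ≡ 1 [MOD q - 1] := ((Nat.modEq_iff_dvd' hq.one_le).mpr dvd_rfl).symm
    (by simpa using hq1.symm.mul_left P : P ≡ P * q [MOD q - 1]).trans hpred
  obtain ⟨k, hk⟩ := (Nat.modEq_iff_dvd' hq.one_le).mp hqg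
  have hq_eq : L.gcd (P - 1) * k + 1 = q := by have := hq.one_le; lia
  have hg : 0 < L.gcd (P - 1) :=
    Nat.pos_of_ne_zero fun h ↦ hq.ne_one (by rw [← hq_eq, h, zero_mul])
  have hqB : q ≤ B / P := (Nat.le_div_iff_mul_le hP).mpr (mul_comm P q ▸ hB)
  have hkB : k ≤ B / P / L.gcd (P - 1) :=
    (Nat.le_div_iff_mul_le hg).mpr (by rw [mul_comm]; lia)
  refine List.mem_map_of_mem (List.mem_filter.mpr ⟨?_, by simpa using ⟨hL, hpq, hPq, hq⟩⟩)
  exact List.mem_map.mpr ⟨k, List.mem_range.mpr (Nat.lt_succ_of_le hkB), hq_eq⟩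

theorem coprime_of_modEq_one {N a m : ℕ} (h : N ≡ 1 [MOD m]) (ha : a ∣ N) : a.Coprime m :=
  Nat.Coprime.coprime_dvd_left ha (h.gcd_eq.trans (Nat.gcd_one_left m))

theorem mul_prod_mem_carmichaelSearch {B d p P L : ℕ} {S : Finset ℕ} (hP : 0 < P)
    (hcard : S.card = d + 1) (hS : ∀ q ∈ S, q.Prime) (hgt : ∀ q ∈ S, p < q)
    (hB : P * ∏ q ∈ S, q ≤ B) (hL : P * ∏ q ∈ S, q ≡ 1 [MOD L])
    (hpred : ∀ r ∈ S, P * ∏ q ∈ S, q ≡ 1 [MOD r - 1]) :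
    P * ∏ q ∈ S, q ∈ carmichaelSearch B d p P L := by
  induction d generalizing p P L S with
  | zero =>
    obtain ⟨q, rfl⟩ := Finset.card_eq_one.mp hcard
    simp only [Finset.mem_singleton, forall_eq, Finset.prod_singleton] at *
    exact mul_mem_carmichaelCompletions hP hB hS hgt hL hpred
  | succ d ih =>
    have hne : S.Nonempty := Finset.card_pos.mp (by lia)
    obtain ⟨q, hqS, hmin⟩ : ∃ q ∈ S, ∀ r ∈ S, q ≤ r :=
      ⟨S.min' hne, S.min'_mem hne, fun r hr ↦ S.min'_le r hr⟩
    have hprod : P * ∏ r ∈ S, r = P * q * ∏ r ∈ S.erase q, r := by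
      rw [mul_assoc, Finset.mul_prod_erase S (fun r ↦ r) hqS]
    have hpow : q ^ (d + 2) ≤ B / P := by
      rw [Nat.le_div_iff_mul_le hP, mul_comm, ← hcard]
      exact (Nat.mul_le_mul_left P (Finset.pow_card_le_prod S _ q hmin)).trans hB
    have hroot : q ≤ Nat.nthRoot (d + 2) (B / P) := (Nat.le_nthRoot_iff (by lia)).mpr hpow
    have hqL : q.Coprime L :=
      coprime_of_modEq_one hL ((Finset.dvd_prod_of_mem _ hqS).mul_left P)
    have hPq : P.Coprime (q - 1) := coprime_of_modEq_one (hpred q hqS) (dvd_mul_right P _)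
    refine List.mem_flatMap.mpr
      ⟨q, List.mem_filter.mpr ⟨?_, by simpa using ⟨hqL, hPq, hS q hqS⟩⟩, ?_⟩
    · rw [List.mem_range'_1]
      have := hgt q hqS
      lia
    · rw [hprod] at hB hL hpred ⊢
      refine ih (Nat.mul_pos hP (hS q hqS).pos) (by rw [Finset.card_erase_of_mem hqS]; lia)
        (fun r hr ↦ hS r (Finset.mem_of_mem_erase hr)) (fun r hr ↦ ?_) hB
        (Nat.mod_lcm hL (hpred q hqS)) (fun r hr ↦ hpred r (Finset.mem_of_mem_erase hr))
      exact (hmin r (Finset.mem_of_mem_erase hr)).lt_of_ne (Finset.ne_of_mem_erase hr).symm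

theorem IsCarmichael.mem_carmichaelSearch {B N d : ℕ} (h : IsCarmichael N) (hB : N ≤ B)
    (hcard : N.primeFactors.card = d + 1) : N ∈ carmichaelSearch B d 1 1 1 := by
  have hprod : 1 * ∏ p ∈ N.primeFactors, p = N := by
    rw [one_mul, Nat.prod_primeFactors_of_squarefree h.squarefree]
  have hprime : ∀ p ∈ N.primeFactors, p.Prime := fun _ ↦ Nat.prime_of_mem_primeFactors
  rw [← hprod]
  refine mul_prod_mem_carmichaelSearch one_pos hcard hprime (fun p hp ↦ (hprime p hp).one_lt)
    (hprod.le.trans hB) Nat.modEq_one fun p hp ↦ ?_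
  rw [hprod]
  exact h.modEq_one_of_prime_dvd (hprime p hp) (Nat.dvd_of_mem_primeFactors hp)

theorem carmichaelSearch_six_prime_factors :
    carmichaelSearch 321197185 5 1 1 1 = [321197185] := by
  decide +kernel

theorem carmichael_smallest_with_6_prime_factors :
    IsCarmichael 321197185 ∧ (Nat.primeFactors 321197185).card = 6 ∧
      ∀ N : ℕ, IsCarmichael N → N.primeFactors.card = 6 → 321197185 ≤ N := by
  have hprod : ∏ p ∈ ({5, 19, 23, 29, 37, 137} : Finset ℕ), p = 321197185 := rfl
  have hprime : ∀ p ∈ ({5, 19, 23, 29, 37, 137} : Finset ℕ), p.Prime := by norm_num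
  refine ⟨?_, ?_, fun N hN hcard ↦ ?_⟩
  · exact hprod ▸ isCarmichael_prod hprime (by decide) (by rw [hprod]; decide)
  · rw [← hprod, Nat.primeFactors_prod hprime]
    rfl
  · by_contra! hlt
    have hmem := hN.mem_carmichaelSearch hlt.le hcard
    rw [carmichaelSearch_six_prime_factors, List.mem_singleton] at hmem
    exact hlt.ne hmem
end

section
/- 5394826801 is a Carmichael number with exactly 7 distinct prime factors, and it is the smallest such: every Carmichael number with exactly 7 distinct prime factors is at least 5394826801. -/
/-!
By Korselt's criterion a composite `N > 1` is a Carmichael number exactly when it is squarefree and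
`p - 1 ∣ N - 1` for every prime `p ∣ N`. Hence the Carmichael numbers below `B` with a given number
of prime factors are found by choosing the prime factors in increasing order. A partial product
`P` with `k` primes still to come, all at least `q`, is abandoned once `P * q ^ k ≥ B`, or once `P`
is not coprime to `L`, the least common multiple of the `p - 1` over the primes chosen: `L` divides
`N - 1` and `P` divides `N`. For `k = 7` and `B = 5394826801` the resulting search tree is small
enough to be traversed by the kernel.
-/

open ArithmeticFunction (carmichael)

theorem coprime_of_dvd_sub_one_of_dvd {N a b : ℕ} (hN : 0 < N) (ha : a ∣ N - 1) (hb : b ∣ N) :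
    a.Coprime b :=
  Nat.Coprime.of_dvd ha hb ((Nat.coprime_self_sub_left hN).2 (Nat.coprime_one_left N))

theorem forall_coprime_pow_modEq_one_iff {n m : ℕ} (hn : n ≠ 0) :
    (∀ b : ℕ, b.Coprime n → b ^ m ≡ 1 [MOD n]) ↔ carmichael n ∣ m := by
  have : NeZero n := ⟨hn⟩
  rw [ArithmeticFunction.carmichael_eq_exponent hn, Monoid.exponent_dvd_iff_forall_pow_eq_one]
  constructor
  · intro h u
    ext
    simpa using (ZMod.natCast_eq_natCast_iff _ _ _).2 (h _ (ZMod.val_coe_unit_coprime u))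
  · intro h b hb
    rw [← ZMod.natCast_eq_natCast_iff]
    simpa using congrArg Units.val (h (ZMod.unitOfCoprime b hb))

theorem carmichael_prime_pow {p n : ℕ} (hp : p.Prime) (h : p ≠ 2 ∨ n ≤ 2) :
    carmichael (p ^ n) = (p ^ n).totient := by
  by_cases hp2 : p = 2
  · subst hp2
    exact ArithmeticFunction.carmichael_two_pow_of_le_two_eq_totient (by simpa using h)
  · exact ArithmeticFunction.carmichael_pow_of_prime_ne_two n hp hp2

theorem carmichael_of_squarefree {n : ℕ} (hn : Squarefree n) :
    carmichael n = n.primeFactors.lcm (fun p => p - 1) := by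
  have : NeZero n := ⟨hn.ne_zero⟩
  rw [ArithmeticFunction.carmichael_factorization]
  refine Finset.lcm_congr rfl fun p hp => ?_
  have hpp := Nat.prime_of_mem_primeFactors hp
  rw [Nat.factorization_eq_one_of_squarefree hn hpp (Nat.dvd_of_mem_primeFactors hp), pow_one,
    carmichael_prime hpp]

theorem squarefree_of_coprime_carmichael {n : ℕ} (hn : (carmichael n).Coprime n) :
    Squarefree n := by
  refine Nat.squarefree_iff_prime_squarefree.2 fun p hp hpn => ?_
  have hp_carmichael_sq : p ∣ carmichael (p * p) := by
    rw [← pow_two, carmichael_prime_pow hp (by simp), Nat.totient_prime_pow hp two_pos]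
    simp
  exact hp.ne_one <| Nat.eq_one_of_dvd_coprimes hn
    (hp_carmichael_sq.trans (ArithmeticFunction.carmichael_dvd hpn)) (dvd_of_mul_left_dvd hpn)

/-- Korselt's criterion. -/
theorem isCarmichael_iff_squarefree_and_sub_one_dvd {N : ℕ} :
    IsCarmichael N ↔
      1 < N ∧ ¬ N.Prime ∧ Squarefree N ∧ ∀ p ∈ N.primeFactors, p - 1 ∣ N - 1 := by
  refine and_congr_right fun hN => and_congr_right fun _ => ?_
  rw [forall_coprime_pow_modEq_one_iff (by omega)]
  constructor
  · intro h
    have hsq : Squarefree N :=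
      squarefree_of_coprime_carmichael (coprime_of_dvd_sub_one_of_dvd (by omega) h dvd_rfl)
    exact ⟨hsq, Finset.lcm_dvd_iff.1 (carmichael_of_squarefree hsq ▸ h)⟩
  · rintro ⟨hsq, h⟩
    exact carmichael_of_squarefree hsq ▸ Finset.lcm_dvd_iff.2 h

/-- The search for Carmichael numbers below `B`. With `P` the product of the primes chosen so far
and `L` the least common multiple of the `p - 1` for these primes `p`, `excludesBelow B l k P L`
certifies that no Carmichael number below `B` is `P` times `k` distinct further primes, each of
them in the increasing list `l` or beyond its last entry. Running out of candidates before one of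
the cutoffs applies counts as failure. -/
def excludesBelow (B : ℕ) : List ℕ → ℕ → ℕ → ℕ → Bool
  | _, 0, P, L => B ≤ P || ¬ L ∣ P - 1
  | [], _ + 1, _, _ => false
  | q :: l, k + 1, P, L =>
    B ≤ P * q ^ (k + 1) || ¬ L.Coprime P ||
      excludesBelow B l k (P * q) (L.lcm (q - 1)) && excludesBelow B l (k + 1) P L

theorem le_of_excludesBelow {N B : ℕ} (hN : 0 < N) {l : List ℕ} {k P L : ℕ}
    (h : excludesBelow B l k P L) (hl : l.Pairwise (· < ·)) {s : Finset ℕ} (hk : s.card = k)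
    (hsl : ∀ p ∈ s, p ∈ l ∨ ∀ q ∈ l, q < p) (hs : ∀ p ∈ s, p - 1 ∣ N - 1) (hL : L ∣ N - 1)
    (hP : P * ∏ p ∈ s, p = N) : B ≤ N := by
  fun_induction excludesBelow generalizing s
  case case1 P L =>
    obtain rfl : P = N := by simpa [Finset.card_eq_zero.1 hk] using hP
    simpa [hL] using h
  case case2 => contradiction
  case case3 q l k P L ih_take ih_skip =>
    obtain ⟨hql, hl'⟩ := List.pairwise_cons.1 hl
    have hcop : L.Coprime P := coprime_of_dvd_sub_one_of_dvd hN hL (Dvd.intro _ hP)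
    have hcases : B ≤ P * q ^ (k + 1) ∨
        excludesBelow B l k (P * q) (L.lcm (q - 1)) ∧ excludesBelow B l (k + 1) P L := by
      simpa [hcop] using h
    rcases hcases with hB | ⟨h_take, h_skip⟩
    · have hqs : ∀ p ∈ s, q ≤ p := by grind
      calc B ≤ P * q ^ s.card := hk ▸ hB
        _ ≤ P * ∏ p ∈ s, p := Nat.mul_le_mul_left P (Finset.pow_card_le_prod s id q hqs)
        _ = N := hP
    by_cases hqs : q ∈ s
    · have hP' : P * q * ∏ p ∈ s.erase q, p = N := by
        rw [mul_assoc, Finset.mul_prod_erase s (fun p => p) hqs, hP]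
      exact ih_take h_take hl' (by grind) (by grind) (by grind) (Nat.lcm_dvd hL (hs q hqs)) hP'
    · exact ih_skip h_skip hl' hk (by grind) hs hL hP

/-- The integers `1 < q < n` that survive trial division by the numbers below `m`. All primes below
`n` are among them, which is all the search needs; deciding `Nat.Prime` in the kernel would be far
slower. -/
def trialPrimesBelow (m n : ℕ) : List ℕ :=
  (List.range n).filter fun q => 1 < q ∧ ∀ d ∈ List.range m, d ∣ q → d = 1 ∨ d = q

theorem pairwise_lt_trialPrimesBelow (m n : ℕ) : (trialPrimesBelow m n).Pairwise (· < ·) :=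
  List.pairwise_lt_range.filter _

theorem mem_trialPrimesBelow_or_forall_lt (m n : ℕ) {p : ℕ} (hp : p.Prime) :
    p ∈ trialPrimesBelow m n ∨ ∀ q ∈ trialPrimesBelow m n, q < p := by
  simp only [trialPrimesBelow, List.mem_filter, List.mem_range, decide_eq_true_eq]
  rcases lt_or_ge p n with hpn | hpn
  · exact .inl ⟨hpn, hp.one_lt, fun d _ hd => (Nat.dvd_prime hp).1 hd⟩
  · exact .inr fun q hq => hq.1.trans_le hpn

theorem IsCarmichael.le_of_excludesBelow_trialPrimesBelow {N B m n : ℕ} (hN : IsCarmichael N)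
    (h : excludesBelow B (trialPrimesBelow m n) N.primeFactors.card 1 1) : B ≤ N := by
  obtain ⟨hN1, -, hsq, hdvd⟩ := isCarmichael_iff_squarefree_and_sub_one_dvd.1 hN
  exact le_of_excludesBelow (by omega) h (pairwise_lt_trialPrimesBelow m n) rfl
    (fun _ hp => mem_trialPrimesBelow_or_forall_lt m n (Nat.prime_of_mem_primeFactors hp))
    hdvd (one_dvd _) ((one_mul _).trans (Nat.prod_primeFactors_of_squarefree hsq))

-- The search consults candidates up to `1597`, and trial division up to `7` already leaves few
-- enough composite ones.
theorem excludesBelow_5394826801 :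
    excludesBelow 5394826801 (trialPrimesBelow 8 1600) 7 1 1 := by
  decide +kernel

theorem primeFactorsList_5394826801 :
    Nat.primeFactorsList 5394826801 = [7, 13, 17, 23, 31, 67, 73] := by
  simp only [Nat.primeFactorsList_ofNat]

theorem primeFactors_5394826801 :
    Nat.primeFactors 5394826801 = {7, 13, 17, 23, 31, 67, 73} := by
  rw [Nat.primeFactors, primeFactorsList_5394826801]
  rfl

theorem isCarmichael_5394826801 : IsCarmichael 5394826801 := by
  refine isCarmichael_iff_squarefree_and_sub_one_dvd.2 ⟨by norm_num, by norm_num, ?_, ?_⟩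
  · rw [Nat.squarefree_iff_nodup_primeFactorsList (by norm_num), primeFactorsList_5394826801]
    decide
  · rw [primeFactors_5394826801]
    decide

theorem carmichael_smallest_with_7_prime_factors :
    IsCarmichael 5394826801 ∧ (Nat.primeFactors 5394826801).card = 7 ∧
      ∀ N : ℕ, IsCarmichael N → N.primeFactors.card = 7 → 5394826801 ≤ N := by
  refine ⟨isCarmichael_5394826801, ?_, fun N hN hcard => ?_⟩
  · rw [primeFactors_5394826801]
    rfl
  · exact hN.le_of_excludesBelow_trialPrimesBelow (hcard ▸ excludesBelow_5394826801)
end
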